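/- In a quasi-median graph, a path is a geodesic if and only if it crosses each hyperplane at most once; consequently, the distance between two vertices equals the number of hyperplanes separating them. -/

import Mathlib

/-- Triangle condition. -/
def TriangleCondition {V : Type*} (X : SimpleGraph V) : Prop :=
  ∀ u v w : V, X.Adj v w → X.dist u v = X.dist u w →
    ∃ x : V, X.Adj v x ∧ X.Adj w x ∧ X.dist u x + 1 = X.dist u v

/-- Quadrangle condition. -/
def QuadrangleCondition {V : Type*} (X : SimpleGraph V) : Prop :=
  ∀ u z v w : V, X.Adj v z → X.Adj w z → v ≠ w →
    X.dist u v = X.dist u w → X.dist u z = X.dist u v + 1 →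
    ∃ x : V, X.Adj v x ∧ X.Adj w x ∧ X.dist u x + 1 = X.dist u v

/-- A graph is weakly modular if it satisfies the triangle and quadrangle conditions. -/
def WeaklyModular {V : Type*} (X : SimpleGraph V) : Prop :=
  TriangleCondition X ∧ QuadrangleCondition X

/-- `K₄⁻`: the complete graph on four vertices minus the edge `{2,3}`. -/
def K4minus : SimpleGraph (Fin 4) :=
  SimpleGraph.fromRel (fun a b => ¬((a = 2 ∧ b = 3) ∨ (a = 3 ∧ b = 2)))

/-- A graph is quasi-median if it is connected, weakly modular, and contains no
induced `K₄⁻` and no induced `K_{3,2}`. -/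
def QuasiMedian {V : Type*} (X : SimpleGraph V) : Prop :=
  X.Connected ∧ WeaklyModular X ∧
    IsEmpty (K4minus ↪g X) ∧ IsEmpty (completeBipartiteGraph (Fin 3) (Fin 2) ↪g X)

/-- Two edges of `X` are elementarily related if they are two sides of a triangle
or opposite sides of a square. -/
def EdgeRel {V : Type*} (X : SimpleGraph V) (e e' : Sym2 V) : Prop :=
  e ∈ X.edgeSet ∧ e' ∈ X.edgeSet ∧
    ((∃ a b c : V, e = s(a, b) ∧ e' = s(a, c) ∧ X.Adj a b ∧ X.Adj a c ∧ X.Adj b c) ∨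
     (∃ a b c d : V, e = s(a, b) ∧ e' = s(c, d) ∧ X.Adj a b ∧ X.Adj c d ∧
        X.Adj a c ∧ X.Adj b d ∧ a ≠ d ∧ b ≠ c))

/-- A hyperplane of `X`: the equivalence class, under the transitive closure of the
square/triangle relation, of some edge of `X`. -/
def IsHyperplane {V : Type*} (X : SimpleGraph V) (J : Set (Sym2 V)) : Prop :=
  ∃ e ∈ X.edgeSet, J = {e' | e' ∈ X.edgeSet ∧ Relation.EqvGen (EdgeRel X) e e'}

/-- A hyperplane `J` separates `u` from `v` if every walk from `u` to `v` uses an edge of `J`. -/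
def Separates {V : Type*} (X : SimpleGraph V) (J : Set (Sym2 V)) (u v : V) : Prop :=
  ∀ p : X.Walk u v, ∃ e ∈ p.edges, e ∈ J

open Classical in
/-- The number of times the walk `p` crosses the hyperplane `J`. -/
noncomputable def crossCount {V : Type*} {X : SimpleGraph V} {u v : V}
    (p : X.Walk u v) (J : Set (Sym2 V)) : ℕ :=
  (p.edges.filter (fun e => e ∈ J)).length

/-!
In a quasi-median graph every edge lies in a unique maximal clique, in which every vertex has a
gate, that is, a nearest vertex through which geodesics to the whole clique pass. Opposite sides of
an induced square span cliques whose gates correspond to each other, so whether two vertices have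
the same gate in the clique of an edge depends only on the hyperplane `J` of that edge. Two adjacent
vertices have different gates exactly when the edge between them is in `J`: if the gates `g ≠ h` of
`x` and `y` differ, the quadrangle condition produces a ladder of squares from `gh` to `xy`. Hence
two vertices have the same gate exactly when `J` does not separate them.

After its first edge `uw`, a geodesic stays closer to `w` than to `u`, so all its later vertices
have gate `w` in the clique of `uw` and it never crosses the hyperplane of `uw` again. Conversely,
if a walk crosses each hyperplane at most once, then the hyperplanes of its edges are distinct and
are exactly those separating its endpoints; its length thus depends on the endpoints only.
-/

open SimpleGraph

section

variable {V : Type*} {X : SimpleGraph V}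

lemma dist_le_dist_add_one_of_adj {x y : V} (h : X.Adj x y) (u : V) :
    X.dist u x ≤ X.dist u y + 1 :=
  dist_eq_one_iff_adj.2 h.symm ▸ h.symm.reachable.dist_triangle_right u

lemma dist_eq_two_of_adj_of_adj {x y z : V} (hxy : X.Adj x y) (hyz : X.Adj y z) (hne : x ≠ z)
    (hxz : ¬ X.Adj x z) : X.dist x z = 2 :=
  le_antisymm (dist_le (.cons hxy (.cons hyz .nil)))
    ((hxy.reachable.trans hyz.reachable).one_lt_dist_of_ne_of_not_adj hne hxz)

lemma exists_adj_dist_eq_of_dist_eq_succ {u v : V} {n : ℕ} (h : X.dist u v = n + 1) :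
    ∃ w, X.Adj v w ∧ X.dist u w = n := by
  rw [dist_comm] at h
  obtain ⟨p, hp⟩ := exists_walk_of_dist_ne_zero (h.trans_ne n.succ_ne_zero)
  cases p with
  | nil => simp at h
  | cons hvw q =>
    have hq := length_eq_dist_of_subwalk hp (q.isSubwalk_cons hvw)
    rw [Walk.length_cons] at hp
    exact ⟨_, hvw, by rw [dist_comm]; omega⟩

lemma dist_lt_dist_of_mem_support_of_length_cons_eq_dist {u v w y : V} {huw : X.Adj u w}
    {p : X.Walk w v} (hp : (Walk.cons huw p).length = X.dist u v) (hy : y ∈ p.support) :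
    X.dist y w < X.dist y u := by
  classical
  have hsub : (p.takeUntil y hy).IsSubwalk p := p.isSubwalk_takeUntil hy
  have hw := length_eq_dist_of_subwalk hp (hsub.trans (p.isSubwalk_cons huw))
  have hu : (Walk.cons huw (p.takeUntil y hy)).length = X.dist u y :=
    length_eq_dist_of_subwalk hp ⟨.nil, p.dropUntil y hy, by simp⟩
  rw [Walk.length_cons] at hu
  rw [dist_comm, X.dist_comm (u := y)]
  omega

/-! ### Forbidden subgraphs -/

lemma isClique_commonNeighbors (hK : IsEmpty (K4minus ↪g X)) {p q : V} (hpq : X.Adj p q) :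
    X.IsClique (X.commonNeighbors p q) := by
  rintro r ⟨hpr, hqr⟩ s ⟨hps, hqs⟩ hrs
  rw [mem_neighborSet] at hpr hqr hps hqs
  by_contra hna
  refine hK.false ⟨⟨![p, q, r, s], fun i j hij ↦ ?_⟩, fun {i j} ↦ ?_⟩
  · have := hpq.ne
    have := hpr.ne
    have := hqr.ne
    have := hps.ne
    have := hqs.ne
    fin_cases i <;> fin_cases j <;> simp_all
  · change X.Adj (![p, q, r, s] i) (![p, q, r, s] j) ↔ _
    fin_cases i <;> fin_cases j <;> simp_all [K4minus, X.adj_comm]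

lemma exists_adj_of_mem_commonNeighbors
    (hK : IsEmpty (completeBipartiteGraph (Fin 3) (Fin 2) ↪g X)) {a d p q r : V}
    (hne : a ≠ d) (had : ¬ X.Adj a d) (hp : p ∈ X.commonNeighbors a d)
    (hq : q ∈ X.commonNeighbors a d) (hr : r ∈ X.commonNeighbors a d)
    (hpq : p ≠ q) (hpr : p ≠ r) (hqr : q ≠ r) : X.Adj p q ∨ X.Adj p r ∨ X.Adj q r := by
  rw [mem_commonNeighbors] at hp hq hr
  by_contra! hna
  refine hK.false ⟨⟨Sum.elim ![p, q, r] ![a, d], fun i j hij ↦ ?_⟩, fun {i j} ↦ ?_⟩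
  · have := hp.1.ne
    have := hp.2.ne
    have := hq.1.ne
    have := hq.2.ne
    have := hr.1.ne
    have := hr.2.ne
    rcases i with i | i <;> rcases j with j | j <;> fin_cases i <;> fin_cases j <;> simp_all
  · change X.Adj (Sum.elim ![p, q, r] ![a, d] i) (Sum.elim ![p, q, r] ![a, d] j) ↔ _
    rcases i with i | i <;> rcases j with j | j <;> fin_cases i <;> fin_cases j <;>
      simp_all [X.adj_comm]

lemma dist_ne_dist_add_one_of_adj_of_dist_eq (hT : TriangleCondition X)
    (hK : IsEmpty (K4minus ↪g X)) {u a b c : V} (hab : X.Adj a b) (hac : X.Adj a c)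
    (hbc : X.Adj b c) (h : X.dist u a = X.dist u b) : X.dist u c ≠ X.dist u a + 1 := by
  intro hc
  obtain ⟨y, hay, hby, hy⟩ := hT u a b hab h
  have hcy : X.Adj c y :=
    isClique_commonNeighbors hK hab ⟨hac, hbc⟩ ⟨hay, hby⟩ (by rintro rfl; omega)
  have := dist_le_dist_add_one_of_adj hcy u
  omega

/-! ### Cliques and gates -/

/-- The set of vertices equal or adjacent to both ends of `e`. In a graph without induced `K₄⁻`
this is the unique maximal clique containing the edge `e`. -/
def edgeClique (X : SimpleGraph V) (e : Sym2 V) : Set V :=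
  {x | ∀ a ∈ e, x = a ∨ X.Adj x a}

lemma mem_edgeClique_mk {a b x : V} :
    x ∈ edgeClique X s(a, b) ↔ (x = a ∨ X.Adj x a) ∧ (x = b ∨ X.Adj x b) := by
  simp [edgeClique]

lemma mem_edgeClique_of_mem {e : Sym2 V} (he : e ∈ X.edgeSet) {a : V} (ha : a ∈ e) :
    a ∈ edgeClique X e := fun b hb ↦ by
  rw [or_iff_not_imp_left]
  intro hab
  rwa [(Sym2.mem_and_mem_iff hab).1 ⟨ha, hb⟩, mem_edgeSet] at he

lemma mem_edgeClique_of_mem_commonNeighbors {a b x : V} (hx : x ∈ X.commonNeighbors a b) :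
    x ∈ edgeClique X s(a, b) :=
  mem_edgeClique_mk.2 ⟨.inr hx.1.symm, .inr hx.2.symm⟩

lemma isClique_edgeClique (hK : IsEmpty (K4minus ↪g X)) {e : Sym2 V} (he : e ∈ X.edgeSet) :
    X.IsClique (edgeClique X e) := by
  induction e with | _ a b
  intro g hg h hh hgh
  obtain ⟨hga, hgb⟩ := mem_edgeClique_mk.1 hg
  obtain ⟨hha, hhb⟩ := mem_edgeClique_mk.1 hh
  rcases hga with rfl | hga
  · exact (hha.resolve_left hgh.symm).symm
  rcases hgb with rfl | hgb
  · exact (hhb.resolve_left hgh.symm).symm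
  rcases hha with rfl | hha
  · exact hga
  rcases hhb with rfl | hhb
  · exact hgb
  exact isClique_commonNeighbors hK he ⟨hga.symm, hgb.symm⟩ ⟨hha.symm, hhb.symm⟩ hgh

lemma edgeClique_mk_eq (hK : IsEmpty (K4minus ↪g X)) {e : Sym2 V} (he : e ∈ X.edgeSet) {g h : V}
    (hg : g ∈ edgeClique X e) (hh : h ∈ edgeClique X e) (hgh : X.Adj g h) :
    edgeClique X s(g, h) = edgeClique X e := by
  have eq_or_adj {e : Sym2 V} (he : e ∈ X.edgeSet) {x y : V} (hx : x ∈ edgeClique X e)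
      (hy : y ∈ edgeClique X e) : x = y ∨ X.Adj x y :=
    or_iff_not_imp_left.2 (isClique_edgeClique hK he hx hy)
  have subset : edgeClique X e ⊆ edgeClique X s(g, h) := fun x hx ↦
    mem_edgeClique_mk.2 ⟨eq_or_adj he hx hg, eq_or_adj he hx hh⟩
  exact subset.antisymm' fun x hx a ha ↦ eq_or_adj hgh hx (subset (mem_edgeClique_of_mem he ha))

/-- The vertex `g` is a gate of `u` in `C`: it lies in `C`, and every vertex of `C` is joined to `u`
by a geodesic through `g`. This is phrased with distances, so it is meaningful only when `u` and `C`
lie in one connected component of `X`. -/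
def IsGate (X : SimpleGraph V) (C : Set V) (u g : V) : Prop :=
  g ∈ C ∧ ∀ k ∈ C, X.dist u k = X.dist u g + X.dist g k

lemma isGate_self {C : Set V} {u : V} (hu : u ∈ C) : IsGate X C u u :=
  ⟨hu, fun k _ ↦ by simp⟩

lemma IsGate.unique (hX : X.Connected) {C : Set V} {u g h : V} (hg : IsGate X C u g)
    (hh : IsGate X C u h) : g = h := by
  rw [← hX.dist_eq_zero_iff]
  have := hg.2 h hh.1
  have := hh.2 g hg.1
  omega

lemma IsGate.dist_eq_add_one {C : Set V} {u g h : V} (hg : IsGate X C u g) (hh : h ∈ C)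
    (hgh : X.Adj g h) : X.dist u h = X.dist u g + 1 :=
  dist_eq_one_iff_adj.2 hgh ▸ hg.2 h hh

lemma isGate_of_dist_lt (hT : TriangleCondition X) (hK : IsEmpty (K4minus ↪g X)) {C : Set V}
    (hC : X.IsClique C) {u g h : V} (hg : g ∈ C) (hh : h ∈ C)
    (hlt : X.dist u g < X.dist u h) : IsGate X C u g := by
  refine ⟨hg, fun k hk ↦ ?_⟩
  obtain rfl | hgk := eq_or_ne g k
  · simp
  have hgh : X.Adj g h := hC hg hh (by rintro rfl; exact hlt.false)
  have hgk : X.Adj g k := hC hg hk hgk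
  have h₁ := dist_le_dist_add_one_of_adj hgh.symm u
  have h₂ := dist_le_dist_add_one_of_adj hgk.symm u
  rw [dist_eq_one_iff_adj.2 hgk]
  obtain rfl | hkh := eq_or_ne k h
  · omega
  have hkh : X.Adj k h := hC hk hh hkh
  have h₃ := dist_le_dist_add_one_of_adj hkh.symm u
  have : X.dist u g ≠ X.dist u k := fun heq ↦
    dist_ne_dist_add_one_of_adj_of_dist_eq hT hK hgk hgh hkh heq (by omega)
  omega

lemma exists_isGate_edgeClique (hT : TriangleCondition X) (hK : IsEmpty (K4minus ↪g X))
    {e : Sym2 V} (he : e ∈ X.edgeSet) (u : V) : ∃ g, IsGate X (edgeClique X e) u g := by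
  have hC := isClique_edgeClique hK he
  induction e with | _ a b
  have ha := mem_edgeClique_of_mem he (Sym2.mem_mk_left a b)
  have hb := mem_edgeClique_of_mem he (Sym2.mem_mk_right a b)
  rcases lt_trichotomy (X.dist u a) (X.dist u b) with h | h | h
  · exact ⟨a, isGate_of_dist_lt hT hK hC ha hb h⟩
  · obtain ⟨g, hag, hbg, hg⟩ := hT u a b he h
    exact ⟨g, isGate_of_dist_lt hT hK hC
      (mem_edgeClique_of_mem_commonNeighbors ⟨hag, hbg⟩) ha (by omega)⟩
  · exact ⟨b, isGate_of_dist_lt hT hK hC hb ha h⟩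

/-! ### Induced squares -/

/-- The vertices `a, b, d, c` form, in this cyclic order, an induced 4-cycle; the sides `ab` and
`cd` are opposite, with `a` facing `c` and `b` facing `d`. -/
structure IsInducedSquare (X : SimpleGraph V) (a b c d : V) : Prop where
  adj_ab : X.Adj a b
  adj_cd : X.Adj c d
  adj_ac : X.Adj a c
  adj_bd : X.Adj b d
  not_adj_ad : ¬ X.Adj a d
  not_adj_bc : ¬ X.Adj b c
  ne_ad : a ≠ d
  ne_bc : b ≠ c

namespace IsInducedSquare

variable {a b c d : V}

lemma swap (h : IsInducedSquare X a b c d) : IsInducedSquare X b a d c :=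
  ⟨h.adj_ab.symm, h.adj_cd.symm, h.adj_bd, h.adj_ac, h.not_adj_bc, h.not_adj_ad, h.ne_bc, h.ne_ad⟩

lemma transpose (h : IsInducedSquare X a b c d) : IsInducedSquare X a c b d :=
  ⟨h.adj_ac, h.adj_bd, h.adj_ab, h.adj_cd, h.not_adj_ad, fun h' ↦ h.not_adj_bc h'.symm, h.ne_ad,
    h.ne_bc.symm⟩

lemma symm (h : IsInducedSquare X a b c d) : IsInducedSquare X c d a b :=
  h.transpose.swap.transpose

lemma not_adj_of_mem_commonNeighbors (hK : IsEmpty (K4minus ↪g X))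
    (h : IsInducedSquare X a b c d) {e : V} (he : e ∈ X.commonNeighbors a b) : ¬ X.Adj e c :=
  fun hec ↦ h.not_adj_bc <|
    isClique_commonNeighbors hK he.1 ⟨h.adj_ab, he.2.symm⟩ ⟨h.adj_ac, hec⟩ h.ne_bc

lemma ne_of_mem_commonNeighbors (h : IsInducedSquare X a b c d) {e : V}
    (he : e ∈ X.commonNeighbors a b) : e ≠ c := by
  rintro rfl
  exact h.not_adj_bc he.2

lemma exists_prism (hT : TriangleCondition X) (hK : IsEmpty (K4minus ↪g X))
    (h : IsInducedSquare X a b c d) {e : V} (he : e ∈ X.commonNeighbors a b) :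
    ∃ f ∈ X.commonNeighbors c d, IsInducedSquare X a e c f := by
  have he' : e ∈ X.commonNeighbors b a := he.symm
  have hec : ¬ X.Adj e c := h.not_adj_of_mem_commonNeighbors hK he
  have hed : ¬ X.Adj e d := h.swap.not_adj_of_mem_commonNeighbors hK he'
  have hc : X.dist e c = 2 :=
    dist_eq_two_of_adj_of_adj he.1.symm h.adj_ac (h.ne_of_mem_commonNeighbors he) hec
  have hd : X.dist e d = 2 :=
    dist_eq_two_of_adj_of_adj he.2.symm h.adj_bd (h.swap.ne_of_mem_commonNeighbors he') hed
  obtain ⟨f, hcf, hdf, hf⟩ := hT e c d h.adj_cd (hc.trans hd.symm)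
  have hef : X.Adj e f := dist_eq_one_iff_adj.1 (by omega)
  have hfa : ¬ X.Adj f a := h.symm.not_adj_of_mem_commonNeighbors hK ⟨hcf, hdf⟩
  exact ⟨f, ⟨hcf, hdf⟩, he.1, hcf, h.adj_ac, hef, fun h' ↦ hfa h'.symm, hec,
    (h.symm.ne_of_mem_commonNeighbors ⟨hcf, hdf⟩).symm, h.ne_of_mem_commonNeighbors he⟩

lemma dist_lt_dist_of_dist_eq (hQ : QuadrangleCondition X) (hK : IsEmpty (K4minus ↪g X))
    (hK' : IsEmpty (completeBipartiteGraph (Fin 3) (Fin 2) ↪g X)) (h : IsInducedSquare X a b c d)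
    {u : V} (hab : X.dist u b = X.dist u a + 1) (had : X.dist u d = X.dist u a) :
    X.dist u c < X.dist u d := by
  by_contra! hdc
  obtain ⟨y, hay, hdy, hy⟩ := hQ u b a d h.adj_ab h.adj_bd.symm h.ne_ad had.symm hab
  have hby : ¬ X.Adj b y := fun hby ↦ by
    have := dist_le_dist_add_one_of_adj hby u
    omega
  rcases exists_adj_of_mem_commonNeighbors hK' h.ne_ad h.not_adj_ad
      ⟨h.adj_ab, h.adj_bd.symm⟩ ⟨h.adj_ac, h.adj_cd.symm⟩ ⟨hay, hdy⟩ h.ne_bc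
      (by rintro rfl; omega) (by rintro rfl; omega) with hbc | hby' | hcy
  · exact h.not_adj_bc hbc
  · exact hby hby'
  · exact h.not_adj_ad (isClique_commonNeighbors hK hcy ⟨h.adj_ac.symm, hay.symm⟩
      ⟨h.adj_cd, hdy.symm⟩ h.ne_ad)

lemma dist_lt_dist (hT : TriangleCondition X) (hQ : QuadrangleCondition X)
    (hK : IsEmpty (K4minus ↪g X)) (hK' : IsEmpty (completeBipartiteGraph (Fin 3) (Fin 2) ↪g X))
    (h : IsInducedSquare X a b c d) {u : V} (hab : X.dist u a < X.dist u b) :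
    X.dist u c < X.dist u d := by
  by_contra! hdc
  have hba := dist_le_dist_add_one_of_adj h.adj_ab.symm u
  have hca := dist_le_dist_add_one_of_adj h.adj_ac.symm u
  have hbd := dist_le_dist_add_one_of_adj h.adj_bd u
  have had : X.dist u d ≠ X.dist u a := fun had ↦
    hdc.not_gt (h.dist_lt_dist_of_dist_eq hQ hK hK' (by omega) had)
  -- Now `b`, `c` and `d` are equidistant from `u`: complete `bd` to a triangle `bdy` pointing
  -- towards `u`, and apply the previous lemma to the face `abty` of the resulting prism.
  obtain ⟨y, hby, hdy, hy⟩ := hT u b d h.adj_bd (by omega)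
  obtain ⟨t, ⟨_, hct⟩, hsq⟩ := h.swap.transpose.exists_prism hT hK ⟨hby, hdy⟩
  have hty : X.dist u t < X.dist u y :=
    hsq.transpose.swap.dist_lt_dist_of_dist_eq hQ hK hK' (by omega) (by omega)
  have := dist_le_dist_add_one_of_adj hct u
  omega

lemma exists_of_mem_edgeClique (hT : TriangleCondition X) (hK : IsEmpty (K4minus ↪g X))
    (h : IsInducedSquare X a b c d) {g : V} (hg : g ∈ edgeClique X s(a, b)) :
    ∃ k g' k', IsInducedSquare X g k g' k' ∧ edgeClique X s(g, k) = edgeClique X s(a, b) ∧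
      edgeClique X s(g', k') = edgeClique X s(c, d) := by
  obtain ⟨hga, hgb⟩ := mem_edgeClique_mk.1 hg
  rcases hga with rfl | hga
  · exact ⟨b, c, d, h, rfl, rfl⟩
  rcases hgb with rfl | hgb
  · exact ⟨a, d, c, h.swap, by rw [Sym2.eq_swap], by rw [Sym2.eq_swap]⟩
  obtain ⟨f, hf, hsq⟩ := h.exists_prism hT hK ⟨hga.symm, hgb.symm⟩
  exact ⟨a, f, c, hsq.swap,
    edgeClique_mk_eq hK h.adj_ab hg (mem_edgeClique_of_mem h.adj_ab (Sym2.mem_mk_left a b)) hga,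
    edgeClique_mk_eq hK h.adj_cd (mem_edgeClique_of_mem_commonNeighbors hf)
      (mem_edgeClique_of_mem h.adj_cd (Sym2.mem_mk_left c d)) hf.1.symm⟩

lemma isGate (hT : TriangleCondition X) (hQ : QuadrangleCondition X)
    (hK : IsEmpty (K4minus ↪g X)) (hK' : IsEmpty (completeBipartiteGraph (Fin 3) (Fin 2) ↪g X))
    (h : IsInducedSquare X a b c d) {u : V} (ha : IsGate X (edgeClique X s(a, b)) u a) :
    IsGate X (edgeClique X s(c, d)) u c := by
  have hb := mem_edgeClique_of_mem h.adj_ab (Sym2.mem_mk_right a b)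
  have hab := ha.dist_eq_add_one hb h.adj_ab
  exact isGate_of_dist_lt hT hK (isClique_edgeClique hK h.adj_cd)
    (mem_edgeClique_of_mem h.adj_cd (Sym2.mem_mk_left c d))
    (mem_edgeClique_of_mem h.adj_cd (Sym2.mem_mk_right c d))
    (h.dist_lt_dist hT hQ hK hK' (by omega))

end IsInducedSquare

/-! ### Hyperplanes -/

lemma EdgeRel.symm {e e' : Sym2 V} (h : EdgeRel X e e') : EdgeRel X e' e := by
  obtain ⟨he, he', ⟨a, b, c, rfl, rfl, hab, hac, hbc⟩ |
    ⟨a, b, c, d, rfl, rfl, hab, hcd, hac, hbd, had, hbc⟩⟩ := h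
  · exact ⟨he', he, .inl ⟨a, c, b, rfl, rfl, hac, hab, hbc.symm⟩⟩
  · exact ⟨he', he, .inr ⟨c, d, a, b, rfl, rfl, hcd, hab, hac.symm, hbd.symm, hbc.symm, had.symm⟩⟩

lemma EdgeRel.edgeClique_eq_or_isInducedSquare (hK : IsEmpty (K4minus ↪g X)) {e e' : Sym2 V}
    (h : EdgeRel X e e') : edgeClique X e = edgeClique X e' ∨
      ∃ a b c d, e = s(a, b) ∧ e' = s(c, d) ∧ IsInducedSquare X a b c d := by
  obtain ⟨_, he', ⟨a, b, c, rfl, rfl, hab, _, hbc⟩ |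
    ⟨a, b, c, d, rfl, rfl, hab, hcd, hac, hbd, had, hbc⟩⟩ := h
  · exact .inl (edgeClique_mk_eq hK he' (mem_edgeClique_of_mem he' (Sym2.mem_mk_left a c))
      (mem_edgeClique_of_mem_commonNeighbors ⟨hab, hbc.symm⟩) hab)
  by_cases hdiag : X.Adj a d ∨ X.Adj b c
  · have hAD : X.Adj a d := hdiag.elim id fun hBC ↦
      isClique_commonNeighbors hK hBC ⟨hab.symm, hac.symm⟩ ⟨hbd, hcd⟩ had
    have hBC : X.Adj b c :=
      isClique_commonNeighbors hK hAD ⟨hab, hbd.symm⟩ ⟨hac, hcd.symm⟩ hbc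
    exact .inl (edgeClique_mk_eq hK he'
      (mem_edgeClique_of_mem_commonNeighbors ⟨hac.symm, hAD.symm⟩)
      (mem_edgeClique_of_mem_commonNeighbors ⟨hBC.symm, hbd.symm⟩) hab)
  · rw [not_or] at hdiag
    exact .inr ⟨a, b, c, d, rfl, rfl, hab, hcd, hac, hbd, hdiag.1, hdiag.2, had, hbc⟩

/-- The hyperplane containing the edge `e`; it satisfies `IsHyperplane` when `e` is an edge of `X`,
and every `J` with `IsHyperplane X J` is of this form. -/
def hyperplane (X : SimpleGraph V) (e : Sym2 V) : Set (Sym2 V) :=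
  {e' | e' ∈ X.edgeSet ∧ Relation.EqvGen (EdgeRel X) e e'}

lemma mem_hyperplane_self {e : Sym2 V} (he : e ∈ X.edgeSet) : e ∈ hyperplane X e :=
  ⟨he, .refl e⟩

lemma EdgeRel.mem_hyperplane {e e' : Sym2 V} (h : EdgeRel X e e') : e' ∈ hyperplane X e :=
  ⟨h.2.1, .rel _ _ h⟩

lemma hyperplane_eq_of_mem {e e' : Sym2 V} (h : e' ∈ hyperplane X e) :
    hyperplane X e' = hyperplane X e :=
  Set.ext fun _ ↦ and_congr_right fun _ ↦
    ⟨h.2.trans _ _ _, (h.2.symm _ _).trans _ _ _⟩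

lemma mem_hyperplane_iff_eq {e e' : Sym2 V} (he' : e' ∈ X.edgeSet) :
    e' ∈ hyperplane X e ↔ hyperplane X e' = hyperplane X e :=
  ⟨hyperplane_eq_of_mem, fun h ↦ h ▸ mem_hyperplane_self he'⟩

lemma mem_hyperplane_trans {e e' e'' : Sym2 V} (h : e' ∈ hyperplane X e)
    (h' : e'' ∈ hyperplane X e') : e'' ∈ hyperplane X e :=
  hyperplane_eq_of_mem h ▸ h'

lemma mem_hyperplane_of_mem_edgeClique (hK : IsEmpty (K4minus ↪g X)) {e : Sym2 V}
    (he : e ∈ X.edgeSet) {g h : V} (hg : g ∈ edgeClique X e) (hh : h ∈ edgeClique X e)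
    (hgh : X.Adj g h) : s(g, h) ∈ hyperplane X e := by
  have hC := isClique_edgeClique hK he
  induction e with | _ a b
  have ha := mem_edgeClique_of_mem he (Sym2.mem_mk_left a b)
  have hb := mem_edgeClique_of_mem he (Sym2.mem_mk_right a b)
  have fan {x y z : V} (hy : y ∈ edgeClique X s(a, b)) (hz : z ∈ edgeClique X s(a, b))
      (hxy : X.Adj x y) (hxz : X.Adj x z) : s(x, z) ∈ hyperplane X s(x, y) := by
    obtain rfl | hyz := eq_or_ne y z
    · exact mem_hyperplane_self hxy
    · exact EdgeRel.mem_hyperplane ⟨hxy, hxz, .inl ⟨x, y, z, rfl, rfl, hxy, hxz, hC hy hz hyz⟩⟩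
  obtain rfl | hag := eq_or_ne a g
  · exact fan hb hh he hgh
  · have hag := hC ha hg hag
    refine mem_hyperplane_trans (fan hb hg he hag) ?_
    rw [Sym2.eq_swap (a := a)]
    exact fan ha hh hag.symm hgh

lemma mem_hyperplane_of_dist_eq (hQ : QuadrangleCondition X) {p q : V} (hpq : X.Adj p q) {n : ℕ} :
    ∀ {x y : V}, X.Adj x y → X.dist p x = n → X.dist q y = n → X.dist p y = n + 1 →
      X.dist q x = n + 1 → s(x, y) ∈ hyperplane X s(p, q) := by
  induction n with
  | zero =>
    intro x y hxy hpx hqy _ hqx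
    have hqx : X.Adj q x := dist_eq_one_iff_adj.1 hqx
    obtain rfl := (hpq.reachable.trans hqx.reachable).dist_eq_zero_iff.1 hpx
    obtain rfl := (hqx.reachable.trans hxy.reachable).dist_eq_zero_iff.1 hqy
    exact mem_hyperplane_self hpq
  | succ n ih =>
    intro x y hxy hpx hqy hpy hqx
    obtain ⟨y', hyy', hqy'⟩ := exists_adj_dist_eq_of_dist_eq_succ hqy
    have hpy' : X.dist p y' = n + 1 := by
      have := dist_le_dist_add_one_of_adj hyy' p
      have := dist_le_dist_add_one_of_adj hpq y'
      rw [dist_comm, X.dist_comm (v := q)] at this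
      omega
    have hxy' : x ≠ y' := by rintro rfl; omega
    obtain ⟨x', hxx', hy'x', hpx'⟩ := hQ p y x y' hxy hyy'.symm hxy' (by omega) (by omega)
    have hqx' : X.dist q x' = n + 1 := by
      have := dist_le_dist_add_one_of_adj hxx' q
      have := dist_le_dist_add_one_of_adj hy'x'.symm q
      omega
    have hx'y : x' ≠ y := by rintro rfl; omega
    refine mem_hyperplane_trans (ih hy'x'.symm (by omega) hqy' hpy' hqx') ?_
    exact EdgeRel.mem_hyperplane ⟨hy'x'.symm, hxy, .inr ⟨x', y', x, y, rfl, rfl, hy'x'.symm, hxy,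
      hxx'.symm, hyy'.symm, hx'y, hxy'.symm⟩⟩

/-! ### Vertices with the same gate -/

/-- The vertices `u` and `v` have the same gate in the maximal clique containing `e`; in a
quasi-median graph, this means that they are not separated by the hyperplane of `e`. -/
def SameGate (X : SimpleGraph V) (e : Sym2 V) (u v : V) : Prop :=
  ∃ g, IsGate X (edgeClique X e) u g ∧ IsGate X (edgeClique X e) v g

lemma SameGate.symm {e : Sym2 V} {u v : V} (h : SameGate X e u v) : SameGate X e v u :=
  h.imp fun _ ↦ And.symm

lemma SameGate.trans (hX : X.Connected) {e : Sym2 V} {u v w : V} (huv : SameGate X e u v)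
    (hvw : SameGate X e v w) : SameGate X e u w := by
  obtain ⟨g, hug, hvg⟩ := huv
  obtain ⟨h, hvh, hwh⟩ := hvw
  exact ⟨g, hug, hvg.unique hX hvh ▸ hwh⟩

lemma not_sameGate_of_adj (hX : X.Connected) {x y : V} (hxy : X.Adj x y) :
    ¬ SameGate X s(x, y) x y := by
  rintro ⟨g, hx, hy⟩
  have hgx := hx.unique hX (isGate_self (mem_edgeClique_of_mem hxy (Sym2.mem_mk_left x y)))
  have hgy := hy.unique hX (isGate_self (mem_edgeClique_of_mem hxy (Sym2.mem_mk_right x y)))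
  exact hxy.ne (hgx.symm.trans hgy)

lemma EdgeRel.sameGate (hX : QuasiMedian X) {e e' : Sym2 V} (h : EdgeRel X e e') {u v : V}
    (huv : SameGate X e u v) : SameGate X e' u v := by
  obtain ⟨-, ⟨hT, hQ⟩, hK, hK'⟩ := hX
  rcases h.edgeClique_eq_or_isInducedSquare hK with heq | ⟨a, b, c, d, rfl, rfl, hsq⟩
  · rwa [SameGate, ← heq]
  · obtain ⟨g, hu, hv⟩ := huv
    obtain ⟨k, g', k', hsq', heq, heq'⟩ := hsq.exists_of_mem_edgeClique hT hK hu.1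
    rw [← heq] at hu hv
    rw [SameGate, ← heq']
    exact ⟨g', hsq'.isGate hT hQ hK hK' hu, hsq'.isGate hT hQ hK hK' hv⟩

lemma sameGate_iff_of_mem_hyperplane (hX : QuasiMedian X) {e e' : Sym2 V}
    (h : e' ∈ hyperplane X e) {u v : V} : SameGate X e u v ↔ SameGate X e' u v := by
  obtain ⟨-, h⟩ := h
  induction h with
  | rel _ _ h => exact ⟨h.sameGate hX, h.symm.sameGate hX⟩
  | refl => rfl
  | symm _ _ _ ih => exact ih.symm
  | trans _ _ _ _ _ ih ih' => exact ih.trans ih'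

lemma mem_hyperplane_of_not_sameGate (hX : QuasiMedian X) {e : Sym2 V} (he : e ∈ X.edgeSet)
    {x y : V} (hxy : X.Adj x y) (h : ¬ SameGate X e x y) : s(x, y) ∈ hyperplane X e := by
  obtain ⟨-, ⟨hT, hQ⟩, hK, -⟩ := hX
  obtain ⟨p, hp⟩ := exists_isGate_edgeClique hT hK he x
  obtain ⟨q, hq⟩ := exists_isGate_edgeClique hT hK he y
  have hpq : X.Adj p q :=
    isClique_edgeClique hK he hp.1 hq.1 (by rintro rfl; exact h ⟨p, hp, hq⟩)
  have hxq : X.dist x q = X.dist x p + 1 := hp.dist_eq_add_one hq.1 hpq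
  have hyp : X.dist y p = X.dist y q + 1 := hq.dist_eq_add_one hp.1 hpq.symm
  have hle₁ := dist_le_dist_add_one_of_adj hxy q
  have hle₂ := dist_le_dist_add_one_of_adj hxy.symm p
  rw [dist_comm, X.dist_comm (u := x)] at hxq
  rw [dist_comm, X.dist_comm (u := y)] at hyp
  exact mem_hyperplane_trans (mem_hyperplane_of_mem_edgeClique hK he hp.1 hq.1 hpq)
    (mem_hyperplane_of_dist_eq hQ hpq hxy rfl (by omega) (by omega) (by omega))

lemma mem_hyperplane_iff_not_sameGate (hX : QuasiMedian X) {e : Sym2 V} (he : e ∈ X.edgeSet)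
    {x y : V} (hxy : X.Adj x y) : s(x, y) ∈ hyperplane X e ↔ ¬ SameGate X e x y :=
  ⟨fun h ↦ (sameGate_iff_of_mem_hyperplane hX h).not.2 (not_sameGate_of_adj hX.1 hxy),
    mem_hyperplane_of_not_sameGate hX he hxy⟩

/-! ### Walks and hyperplanes -/

lemma sameGate_of_forall_notMem_hyperplane (hX : QuasiMedian X) {e : Sym2 V} (he : e ∈ X.edgeSet)
    {u v : V} (p : X.Walk u v) (hp : ∀ f ∈ p.edges, f ∉ hyperplane X e) : SameGate X e u v := by
  induction p with
  | @nil u =>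
    have ⟨_, ⟨hT, _⟩, hK, _⟩ := hX
    obtain ⟨g, hg⟩ := exists_isGate_edgeClique hT hK he u
    exact ⟨g, hg, hg⟩
  | cons huw q ih =>
    rw [Walk.edges_cons, List.forall_mem_cons, mem_hyperplane_iff_not_sameGate hX he huw,
      not_not] at hp
    exact hp.1.trans hX.1 (ih hp.2)

lemma separates_hyperplane_of_not_sameGate (hX : QuasiMedian X) {e : Sym2 V}
    (he : e ∈ X.edgeSet) {u v : V} (h : ¬ SameGate X e u v) :
    Separates X (hyperplane X e) u v := by
  intro q
  by_contra! hq
  exact h (sameGate_of_forall_notMem_hyperplane hX he q hq)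

lemma crossCount_cons_of_mem {u v w : V} (h : X.Adj u v) (q : X.Walk v w) {J : Set (Sym2 V)}
    (hJ : s(u, v) ∈ J) : crossCount (.cons h q) J = crossCount q J + 1 := by
  simp [crossCount, hJ]

lemma crossCount_cons_of_notMem {u v w : V} (h : X.Adj u v) (q : X.Walk v w) {J : Set (Sym2 V)}
    (hJ : s(u, v) ∉ J) : crossCount (.cons h q) J = crossCount q J := by
  simp [crossCount, hJ]

lemma crossCount_eq_zero_iff {u v : V} {p : X.Walk u v} {J : Set (Sym2 V)} :
    crossCount p J = 0 ↔ ∀ f ∈ p.edges, f ∉ J := by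
  simp [crossCount]

open Classical in
lemma count_map_hyperplane_edges {u v : V} (p : X.Walk u v) (e : Sym2 V) :
    (p.edges.map (hyperplane X)).count (hyperplane X e) = crossCount p (hyperplane X e) := by
  rw [List.count, List.countP_map, List.countP_eq_length_filter, crossCount]
  congr 1
  refine List.filter_congr fun f hf ↦ ?_
  rw [Bool.eq_iff_iff]
  simp [mem_hyperplane_iff_eq (p.edges_subset_edgeSet hf)]

lemma not_sameGate_of_crossCount_eq_one (hX : QuasiMedian X) {e : Sym2 V} (he : e ∈ X.edgeSet)
    {u v : V} (p : X.Walk u v) (hp : crossCount p (hyperplane X e) = 1) :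
    ¬ SameGate X e u v := by
  induction p with
  | nil => simp [crossCount] at hp
  | @cons u w v huw q ih =>
    intro huv
    by_cases hJ : s(u, w) ∈ hyperplane X e
    · rw [crossCount_cons_of_mem huw q hJ, Nat.add_eq_right, crossCount_eq_zero_iff] at hp
      have hwv := sameGate_of_forall_notMem_hyperplane hX he q hp
      exact (mem_hyperplane_iff_not_sameGate hX he huw).1 hJ (huv.trans hX.1 hwv.symm)
    · rw [crossCount_cons_of_notMem huw q hJ] at hp
      rw [mem_hyperplane_iff_not_sameGate hX he huw, not_not] at hJ
      exact ih hp (hJ.symm.trans hX.1 huv)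

lemma notMem_hyperplane_of_length_cons_eq_dist (hX : QuasiMedian X) {u v w : V} {huw : X.Adj u w}
    {p : X.Walk w v} (hp : (Walk.cons huw p).length = X.dist u v) {f : Sym2 V}
    (hf : f ∈ p.edges) : f ∉ hyperplane X s(u, w) := by
  have ⟨_, ⟨hT, _⟩, hK, _⟩ := hX
  have isGate_w {y : V} (hy : y ∈ p.support) : IsGate X (edgeClique X s(u, w)) y w :=
    isGate_of_dist_lt hT hK (isClique_edgeClique hK huw)
      (mem_edgeClique_of_mem huw (Sym2.mem_mk_right u w))
      (mem_edgeClique_of_mem huw (Sym2.mem_mk_left u w))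
      (dist_lt_dist_of_mem_support_of_length_cons_eq_dist hp hy)
  induction f with | _ y z
  rw [mem_hyperplane_iff_not_sameGate hX huw (p.edges_subset_edgeSet hf), not_not]
  exact ⟨w, isGate_w (p.fst_mem_support_of_mem_edges hf),
    isGate_w (p.snd_mem_support_of_mem_edges hf)⟩

lemma crossCount_hyperplane_le_one_of_length_eq_dist (hX : QuasiMedian X) {u v : V}
    (p : X.Walk u v) (hp : p.length = X.dist u v) (e : Sym2 V) :
    crossCount p (hyperplane X e) ≤ 1 := by
  induction p with
  | nil => simp [crossCount]
  | @cons u w v huw q ih =>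
    by_cases hJ : s(u, w) ∈ hyperplane X e
    · have hq : crossCount q (hyperplane X e) = 0 := by
        rw [← hyperplane_eq_of_mem hJ, crossCount_eq_zero_iff]
        exact fun f hf ↦ notMem_hyperplane_of_length_cons_eq_dist hX hp hf
      rw [crossCount_cons_of_mem huw q hJ, hq]
    · rw [crossCount_cons_of_notMem huw q hJ]
      exact ih (length_eq_dist_of_subwalk hp (q.isSubwalk_cons huw))

lemma nodup_map_hyperplane_edges {u v : V} {p : X.Walk u v}
    (hp : ∀ J, IsHyperplane X J → crossCount p J ≤ 1) : (p.edges.map (hyperplane X)).Nodup := by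
  classical
  refine List.nodup_iff_count_le_one.2 fun J ↦ ?_
  by_cases hJ : J ∈ p.edges.map (hyperplane X)
  · obtain ⟨e, he, rfl⟩ := List.mem_map.1 hJ
    rw [count_map_hyperplane_edges]
    exact hp _ ⟨e, p.edges_subset_edgeSet he, rfl⟩
  · rw [List.count_eq_zero_of_not_mem hJ]
    exact zero_le_one

lemma isHyperplane_and_separates_iff (hX : QuasiMedian X) {u v : V} {p : X.Walk u v}
    (hp : ∀ J, IsHyperplane X J → crossCount p J ≤ 1) {J : Set (Sym2 V)} :
    IsHyperplane X J ∧ Separates X J u v ↔ J ∈ p.edges.map (hyperplane X) := by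
  rw [List.mem_map]
  constructor
  · rintro ⟨⟨e, -, rfl⟩, hsep⟩
    obtain ⟨f, hf, hfe⟩ := hsep p
    exact ⟨f, hf, hyperplane_eq_of_mem hfe⟩
  · rintro ⟨e, he, rfl⟩
    have he' := p.edges_subset_edgeSet he
    have hJ : IsHyperplane X (hyperplane X e) := ⟨e, he', rfl⟩
    have hpos : crossCount p (hyperplane X e) ≠ 0 := fun h ↦
      crossCount_eq_zero_iff.1 h e he (mem_hyperplane_self he')
    have hone : crossCount p (hyperplane X e) = 1 :=
      le_antisymm (hp _ hJ) (Nat.one_le_iff_ne_zero.2 hpos)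
    exact ⟨hJ, separates_hyperplane_of_not_sameGate hX he'
      (not_sameGate_of_crossCount_eq_one hX he' p hone)⟩

lemma length_eq_ncard_separating_hyperplanes (hX : QuasiMedian X) {u v : V} {p : X.Walk u v}
    (hp : ∀ J, IsHyperplane X J → crossCount p J ≤ 1) :
    p.length = {J | IsHyperplane X J ∧ Separates X J u v}.ncard := by
  classical
  simp_rw [isHyperplane_and_separates_iff hX hp, ← List.coe_toFinset]
  rw [Set.ncard_coe_finset, List.toFinset_card_of_nodup (nodup_map_hyperplane_edges hp),
    List.length_map, Walk.length_edges]

end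

/-- In a quasi-median graph, a walk is a geodesic iff it crosses each hyperplane at most
once; consequently the distance between two vertices equals the number of hyperplanes
separating them. -/
theorem geodesic_iff_crosses_once {V : Type*} (X : SimpleGraph V) (hX : QuasiMedian X) :
    (∀ (u v : V) (p : X.Walk u v),
      p.length = X.dist u v ↔ ∀ J : Set (Sym2 V), IsHyperplane X J → crossCount p J ≤ 1) ∧
    (∀ u v : V, X.dist u v = {J : Set (Sym2 V) | IsHyperplane X J ∧ Separates X J u v}.ncard) := by
  have cross {u v : V} {p : X.Walk u v} (hp : p.length = X.dist u v) (J : Set (Sym2 V))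
      (hJ : IsHyperplane X J) : crossCount p J ≤ 1 := by
    obtain ⟨e, -, rfl⟩ := hJ
    exact crossCount_hyperplane_le_one_of_length_eq_dist hX p hp e
  have dist_eq (u v : V) :
      X.dist u v = {J : Set (Sym2 V) | IsHyperplane X J ∧ Separates X J u v}.ncard := by
    obtain ⟨p, hp⟩ := hX.1.exists_walk_length_eq_dist u v
    exact hp.symm.trans (length_eq_ncard_separating_hyperplanes hX (cross hp))
  refine ⟨fun u v p ↦ ⟨cross, fun hp ↦ ?_⟩, dist_eq⟩
  exact (length_eq_ncard_separating_hyperplanes hX hp).trans (dist_eq u v).symm
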